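/- Let p be a prime and G a non-abelian finite p-group of order p^n and nilpotency class c, with derived subgroup of order p^k and minimal number of generators d. If d ≥ c, then |M(G)| ≤ p^{(1/2)(d-1)(n+k) − (1/2)(c-1)(2d−(c+2))}. -/

import Mathlib

/-- The Schur multiplier of a group `G`: the second cohomology group `H²(G, ℂˣ)`
of `G` with coefficients in `ℂˣ` (with trivial `G`-action), as in the paper. -/
noncomputable def schurMultiplier (G : Type) [Group G] : Type :=
  groupCohomology (Rep.trivial ℤ G (Additive ℂˣ)) 2


namespace SchurBound

open Subgroup
open scoped commutatorElement

theorem abs_count {A C : Type*} [Group A] [Finite A] [CommGroup C] {d : ℕ}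
    (θ : Fin d → A →* C) (S : Finset (Fin d)) (w : A)
    (hw : ∀ j, θ j w ∈ ⨆ s ∈ S, (θ s).range) :
    Nat.card ↥(⨆ j, (θ j).range) * orderOf w ^ (d - S.card) ≤ Nat.card A ^ d := by
  classical
  let Φ : (Fin d → A) →* C :=
    { toFun := fun f => ∏ j, θ j (f j)
      map_one' := by simp
      map_mul' := by intro f g; simp [Finset.prod_mul_distrib] }
  let Ψ : (Fin d → A) →* C :=
    { toFun := fun f => ∏ j ∈ S, θ j (f j)
      map_one' := by simp
      map_mul' := by intro f g; simp [Finset.prod_mul_distrib] }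
  have h1 : (⨆ j, (θ j).range) ≤ Φ.range := by
    refine iSup_le fun j => ?_
    rintro _ ⟨a, rfl⟩
    refine ⟨Pi.mulSingle j a, ?_⟩
    show ∏ i, θ i ((Pi.mulSingle j a : Fin d → A) i) = _
    rw [Finset.prod_eq_single j]
    · simp
    · intro b _ hb; simp [Pi.mulSingle_eq_of_ne hb]
    · simp
  have h2 : (⨆ s ∈ S, (θ s).range) ≤ Ψ.range := by
    refine iSup_le fun j => iSup_le fun hj => ?_
    rintro _ ⟨a, rfl⟩
    refine ⟨Pi.mulSingle j a, ?_⟩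
    show ∏ i ∈ S, θ i ((Pi.mulSingle j a : Fin d → A) i) = _
    rw [Finset.prod_eq_single j]
    · simp
    · intro b _ hb; simp [Pi.mulSingle_eq_of_ne hb]
    · simp [hj]
  have h3 : ∀ g : {j // j ∉ S} → zpowers w, ∃ f ∈ Φ.ker, ∀ j : {j // j ∉ S}, f j = (g j : A) := by
    intro g
    let g' : Fin d → A := fun j => if h : j ∉ S then (g ⟨j, h⟩ : A) else 1
    have hg' : ∀ j, g' j ∈ zpowers w := by
      intro j; by_cases h : j ∉ S
      · simp only [g', dif_pos h]; exact (g ⟨j, h⟩).2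
      · simp only [g', dif_neg h]; exact one_mem _
    have hT : ∏ j, θ j (g' j) ∈ Ψ.range := by
      apply Subgroup.prod_mem
      intro j _
      obtain ⟨z, hz⟩ := mem_zpowers_iff.1 (hg' j)
      rw [← hz, map_zpow]
      exact zpow_mem (h2 (hw j)) z
    obtain ⟨a, ha⟩ := hT
    refine ⟨fun j => if j ∈ S then (a j)⁻¹ else g' j, ?_, ?_⟩
    · rw [MonoidHom.mem_ker]
      show ∏ j, θ j (if j ∈ S then (a j)⁻¹ else g' j) = 1
      have ha' : ∏ j ∈ S, θ j (a j) = ∏ j, θ j (g' j) := ha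
      have : ∏ j, θ j (g' j) = ∏ j, (if j ∈ S then 1 else θ j (g' j)) := by
        refine Finset.prod_congr rfl fun j _ => ?_
        split_ifs with h
        · simp [g', h]
        · rfl
      have h5 : ∏ j ∈ S, θ j (a j) = ∏ j, (if j ∈ S then θ j (a j) else 1) := by
        rw [Finset.prod_ite_mem]; simp
      rw [← mul_right_inj (∏ j ∈ S, θ j (a j)), mul_one]
      conv_rhs => rw [ha', this]
      rw [h5, ← Finset.prod_mul_distrib]
      refine Finset.prod_congr rfl fun j _ => ?_
      split_ifs with h <;> simp
    · rintro ⟨j, hj⟩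
      simp [hj, g']
  choose F hF hF' using h3
  have h4 : Nat.card ({j // j ∉ S} → zpowers w) ≤ Nat.card Φ.ker := by
    refine Nat.card_le_card_of_injective (fun g => ⟨F g, hF g⟩) ?_
    intro g g' h
    funext j
    have h' : F g = F g' := congrArg Subtype.val h
    exact Subtype.ext (by rw [← hF' g j, ← hF' g' j, h'])
  have h6 : Nat.card ({j // j ∉ S} → zpowers w) = orderOf w ^ (d - S.card) := by
    rw [Nat.card_fun, Nat.card_zpowers]
    congr 1
    simp [Fintype.card_subtype_compl]
  have h7 := Subgroup.card_mul_index Φ.ker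
  rw [Subgroup.index_ker, Nat.card_fun, Nat.card_fin] at h7
  rw [← h7, mul_comm, ← h6]
  have : Finite Φ.range := Set.finite_range Φ |>.to_subtype
  exact Nat.mul_le_mul h4 (Nat.card_le_card_of_injective _ (Subgroup.inclusion_injective h1))

/-- commutation with a fixed element, when all commutators are central -/
def commHom {Q : Type*} [Group Q] (U : Subgroup Q)
    (hU : ∀ u ∈ U, ∀ y, ⁅u, y⁆ ∈ center Q) (y : Q) : U →* center Q where
  toFun u := ⟨⁅(u : Q), y⁆, hU u u.2 y⟩
  map_one' := by ext; simp
  map_mul' := by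
    intro u v
    ext
    show ⁅(u : Q) * v, y⁆ = ⁅(u : Q), y⁆ * ⁅(v : Q), y⁆
    rw [commutatorElement_mul_left_eq_conj_mul]
    have h1 := mem_center_iff.1 (hU v v.2 y)
    have h2 := mem_center_iff.1 (hU u u.2 y)
    rw [h1 u, mul_inv_cancel_right, ← h2]

theorem comm_mul_right {Q : Type*} [Group Q] {u y z : Q} 
    (h : ⁅u, z⁆ ∈ center Q) : ⁅u, y * z⁆ = ⁅u, y⁆ * ⁅u, z⁆ := by
  rw [commutatorElement_mul_right_eq_mul_conj, mul_assoc ⁅u, y⁆, mem_center_iff.1 h y,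
    ← mul_assoc, mul_inv_cancel_right]

theorem lemA0 {Q : Type*} [Group Q] (U Z' : Subgroup Q)
    (hU : ∀ u ∈ U, ∀ y, ⁅u, y⁆ ∈ center Q) (hZ : Z' ≤ center Q) {d : ℕ}
    (x : Fin d → Q) (hx : Subgroup.closure (Set.range x ∪ {y | ∀ u ∈ U, ⁅u, y⁆ = 1}) = ⊤) (S : Finset (Fin d)) (w : Q)
    (hwU : w ∈ U)
    (hw : ∀ j, ⁅w, x j⁆ ∈ Subgroup.closure {q | ∃ u ∈ U, ∃ s ∈ S, ⁅u, x s⁆ = q})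
    (p : ℕ) (hp : ∀ k, 0 < k → w ^ k ∈ Z' → p ≤ k) (hpa : Z'.relIndex U ≠ 0) :
    Nat.card ↥⁅U, (⊤ : Subgroup Q)⁆ * p ^ (d - S.card) ≤ (Z'.relIndex U) ^ d := by
  have : Z'.Normal := ⟨fun n hn g => by
    rw [mem_center_iff.1 (hZ hn) g, mul_inv_cancel_right]; exact hn⟩
  let A := U ⧸ Z'.subgroupOf U
  have hcA : Nat.card A = Z'.relIndex U := rfl
  have : Finite A := Nat.finite_of_card_ne_zero hpa
  let θ : Fin d → A →* center Q := fun j => QuotientGroup.lift _ (commHom U hU (x j)) (by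
    intro u hu
    rw [mem_subgroupOf] at hu
    rw [MonoidHom.mem_ker]
    ext
    show ⁅(u : Q), x j⁆ = 1
    rw [commutatorElement_eq_one_iff_mul_comm, mem_center_iff.1 (hZ hu)])
  let _ : CommGroup (center Q) := { (inferInstance : Group (center Q)) with
    mul_comm := fun a b => Subtype.ext (mem_center_iff.1 b.2 a) }
  let w' : A := QuotientGroup.mk (⟨w, hwU⟩ : U)
  have key := abs_count (C := center Q) θ S w' (by
    intro j
    have h1 : ∀ q ∈ Subgroup.closure {q | ∃ u ∈ U, ∃ s ∈ S, ⁅u, x s⁆ = q},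
        q ∈ (⨆ s ∈ S, (θ s).range).map (center Q).subtype := by
      rw [← SetLike.le_def, closure_le]
      rintro _ ⟨u, hu, s, hs, rfl⟩
      refine ⟨θ s (QuotientGroup.mk (⟨u, hu⟩ : U)), ?_, rfl⟩
      exact (le_iSup₂_of_le (f := fun s (_ : s ∈ S) => (θ s).range) s hs le_rfl) ⟨_, rfl⟩
    obtain ⟨y, hy, hy'⟩ := h1 _ (hw j)
    have : θ j w' = y := Subtype.ext hy'.symm
    rw [this]; exact hy)
  have hord : p ≤ orderOf w' := by
    refine hp _ (orderOf_pos w') ?_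
    have h1 := pow_orderOf_eq_one w'
    exact mem_subgroupOf.1 ((QuotientGroup.eq_one_iff ((⟨w, hwU⟩ : U) ^ orderOf w')).1 h1)
  have hle : ⁅U, (⊤ : Subgroup Q)⁆ ≤ (⨆ j, (θ j).range).map (center Q).subtype := by
    rw [commutator_le]
    intro u hu y _
    have hy : y ∈ Subgroup.closure (Set.range x ∪ {y | ∀ u ∈ U, ⁅u, y⁆ = 1}) := by rw [hx]; trivial
    induction hy using closure_induction with
    | mem z hz =>
      rcases hz with ⟨j, rfl⟩ | hz
      swap
      · rw [hz u hu]; exact one_mem _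
      exact ⟨θ j (QuotientGroup.mk (⟨u, hu⟩ : U)), (le_iSup (fun j => (θ j).range) j) ⟨_, rfl⟩, rfl⟩
    | one => simp
    | mul y z _ _ h1 h2 =>
      rw [comm_mul_right (hU u hu z)]
      exact mul_mem (h1 trivial) (h2 trivial)
    | inv y _ h1 =>
      have : ⁅u, y⁻¹⁆ = ⁅u, y⁆⁻¹ := by
        rw [eq_inv_iff_mul_eq_one, ← comm_mul_right (hU u hu y)]; simp
      rw [this]; exact inv_mem (h1 trivial)
  have hfin : Finite ↥(⨆ j, (θ j).range) := by
    let Φ : (Fin d → A) →* center Q :=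
      { toFun := fun f => ∏ j, θ j (f j)
        map_one' := by simp
        map_mul' := by intro f g; simp [Finset.prod_mul_distrib] }
    have h1 : (⨆ j, (θ j).range) ≤ Φ.range := by
      classical
      refine iSup_le fun j => ?_
      rintro _ ⟨a, rfl⟩
      refine ⟨Pi.mulSingle j a, ?_⟩
      show ∏ i, θ i ((Pi.mulSingle j a : Fin d → A) i) = _
      rw [Finset.prod_eq_single j]
      · simp
      · intro b _ hb; simp [Pi.mulSingle_eq_of_ne hb]
      · simp
    have : Finite Φ.range := Set.finite_range Φ |>.to_subtype
    exact Finite.of_injective _ (Subgroup.inclusion_injective h1)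
  have hcard : Nat.card ↥((⨆ j, (θ j).range).map (center Q).subtype) =
      Nat.card ↥(⨆ j, (θ j).range) :=
    Nat.card_congr (Subgroup.equivMapOfInjective _ _ (center Q).subtype_injective).toEquiv.symm
  have : Finite ↥((⨆ j, (θ j).range).map (center Q).subtype) :=
    Finite.of_equiv _ (Subgroup.equivMapOfInjective _ _ (center Q).subtype_injective).toEquiv
  calc _ ≤ Nat.card ↥(⨆ j, (θ j).range) * orderOf w' ^ (d - S.card) := by
        rw [← hcard]
        exact Nat.mul_le_mul (Nat.card_le_card_of_injective _ (Subgroup.inclusion_injective hle))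
          (Nat.pow_le_pow_left hord _)
    _ ≤ _ := key


theorem lemA {Q : Type*} [Group Q] (U Z' : Subgroup Q)
    (hU : ∀ u ∈ U, ∀ y, ⁅u, y⁆ ∈ center Q) (hZ : Z' ≤ center Q) {d : ℕ}
    (x : Fin d → Q) (hx : Subgroup.closure (Set.range x) = ⊤) (S : Finset (Fin d)) (w : Q)
    (hwU : w ∈ U) (hwZ : w ∉ Z')
    (hw : ∀ j, ⁅w, x j⁆ ∈ Subgroup.closure {q | ∃ u ∈ U, ∃ s ∈ S, ⁅u, x s⁆ = q})
    (p a : ℕ) (hp : p.Prime) (hpa : Z'.relIndex U = p ^ a) :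
    Nat.card ↥⁅U, (⊤ : Subgroup Q)⁆ * p ^ (d - S.card) ≤ (Z'.relIndex U) ^ d := by
  have : Z'.Normal := ⟨fun n hn g => by
    rw [mem_center_iff.1 (hZ hn) g, mul_inv_cancel_right]; exact hn⟩
  refine lemA0 U Z' hU hZ x ?_ S w hwU hw p ?_ ?_
  · rw [Subgroup.closure_union, hx, top_sup_eq]
  · intro k hk hwk
    by_contra! hlt
    have h1 : w ^ (p ^ a) ∈ Z' := by
      have := Subgroup.pow_index_mem (Z'.subgroupOf U) ⟨w, hwU⟩
      rw [show (Z'.subgroupOf U).index = p ^ a from hpa] at this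
      exact this
    have h2 : orderOf (QuotientGroup.mk w : Q ⧸ Z') ∣ k :=
      orderOf_dvd_of_pow_eq_one ((QuotientGroup.eq_one_iff (w ^ k)).2 hwk)
    have h3 : orderOf (QuotientGroup.mk w : Q ⧸ Z') ∣ p ^ a :=
      orderOf_dvd_of_pow_eq_one ((QuotientGroup.eq_one_iff (w ^ (p ^ a))).2 h1)
    have h4 : Nat.Coprime k (p ^ a) :=
      Nat.Coprime.pow_right _ (((Nat.Prime.coprime_iff_not_dvd hp).2 (Nat.not_dvd_of_pos_of_lt hk hlt)).symm)
    have h5 := Nat.eq_one_of_dvd_coprimes h4 h2 h3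
    rw [orderOf_eq_one_iff] at h5
    exact hwZ ((QuotientGroup.eq_one_iff w).1 h5)
  · rw [hpa]; exact pow_ne_zero _ hp.ne_zero


/-- the lower central series of the whole group -/
local notation "𝓛" => Subgroup.lowerCentralSeries (⊤ : Subgroup _)

theorem comm_swap_mem {Q : Type*} [Group Q] (N : Subgroup Q) {x y : Q}
    (h : ⁅x, y⁆ ∈ N) : ⁅y, x⁆ ∈ N := by
  rw [← commutatorElement_inv]; exact inv_mem h

theorem comm_comm_mem {Q : Type*} [Group Q] (N : Subgroup Q) [N.Normal] {x y z : Q}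
    (h1 : ⁅y, ⁅z⁻¹, x⁻¹⁆⁆ ∈ N) (h2 : ⁅x⁻¹, ⁅y⁻¹, z⁆⁆ ∈ N) : ⁅⁅x, y⁆, z⁆ ∈ N := by
  apply comm_swap_mem
  have : ⁅z, ⁅x, y⁆⁆ =
      x * ((z * ⁅y, ⁅z⁻¹, x⁻¹⁆⁆⁻¹ * z⁻¹) * (y * ⁅x⁻¹, ⁅y⁻¹, z⁆⁆⁻¹ * y⁻¹)) * x⁻¹ := by
    simp [commutatorElement_def, mul_assoc]
  rw [this]
  refine Normal.conj_mem inferInstance _ (mul_mem ?_ ?_) _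
  · exact Normal.conj_mem inferInstance _ (inv_mem h1) _
  · exact Normal.conj_mem inferInstance _ (inv_mem h2) _

theorem comm_mem_of_mem_left {Q : Type*} [Group Q] (N : Subgroup Q) [N.Normal] {x y : Q}
    (h : x ∈ N) : ⁅x, y⁆ ∈ N := by
  rw [commutatorElement_def, mul_assoc, mul_assoc]
  refine mul_mem h ?_
  rw [← mul_assoc]
  exact Normal.conj_mem inferInstance _ (inv_mem h) _

theorem comm_mul_left_mem {Q : Type*} [Group Q] (N : Subgroup Q) [N.Normal] {x x' y : Q}
    (h : ⁅x, y⁆ ∈ N) (h' : ⁅x', y⁆ ∈ N) : ⁅x * x', y⁆ ∈ N := by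
  rw [commutatorElement_mul_left_eq_conj_mul]
  exact mul_mem (Normal.conj_mem inferInstance _ h' _) h

theorem comm_inv_left_mem {Q : Type*} [Group Q] (N : Subgroup Q) [N.Normal] {x y : Q}
    (h : ⁅x, y⁆ ∈ N) : ⁅x⁻¹, y⁆ ∈ N := by
  rw [commutatorElement_inv_left]
  have := Normal.conj_mem (inferInstance : N.Normal) _ (comm_swap_mem N h) x⁻¹
  rwa [inv_inv] at this

theorem lcs_comm {Q : Type*} [Group Q] (i : ℕ) : ∀ j : ℕ, ∀ u ∈ (𝓛 i : Subgroup Q),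
    ∀ v ∈ (𝓛 j : Subgroup Q), ⁅u, v⁆ ∈ (𝓛 (i + j + 1) : Subgroup Q) := by
  induction i with
  | zero =>
    intro j u _ v hv
    rw [zero_add]
    exact comm_swap_mem _ (commutator_mem_commutator hv trivial)
  | succ i ih =>
    intro j u hu v hv
    have hu' : u ∈ ⁅(𝓛 i : Subgroup Q), (⊤ : Subgroup Q)⁆ := hu
    rw [Subgroup.commutator_def] at hu'
    induction hu' using closure_induction with
    | mem z hz =>
      obtain ⟨a, ha, b, -, rfl⟩ := hz
      apply comm_comm_mem
      · have h1 := ih j _ (inv_mem ha) _ (inv_mem hv)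
        have h2 : ⁅v⁻¹, a⁻¹⁆ ∈ (𝓛 (i + j + 1) : Subgroup Q) := comm_swap_mem _ h1
        have h3 : ⁅⁅v⁻¹, a⁻¹⁆, b⁆ ∈ (𝓛 (i + j + 1 + 1) : Subgroup Q) :=
          commutator_mem_commutator h2 trivial
        have := comm_swap_mem _ h3
        rwa [show i + 1 + j + 1 = i + j + 1 + 1 by ring]
      · have h1 : ⁅v, b⁻¹⁆ ∈ (𝓛 (j + 1) : Subgroup Q) := commutator_mem_commutator hv trivial
        have := ih (j + 1) _ (inv_mem ha) _ (comm_swap_mem _ h1)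
        rwa [show i + 1 + j + 1 = i + (j + 1) + 1 by ring]
    | one => simp
    | mul y z hy hz h1 h2 => exact comm_mul_left_mem _ (h1 hy) (h2 hz)
    | inv y hy h1 => exact comm_inv_left_mem _ (h1 hy)

/-- left-normed commutators of weight `i + 1` in the generators, with their support -/
inductive LN {Q : Type*} [Group Q] {d : ℕ} (x : Fin d → Q) : ℕ → Finset (Fin d) → Q → Prop
  | base (j : Fin d) : LN x 0 {j} (x j)
  | step (i : ℕ) (S : Finset (Fin d)) (w : Q) (j : Fin d) (h : LN x i S w) :
      LN x (i + 1) (insert j S) ⁅w, x j⁆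

theorem LN.mem {Q : Type*} [Group Q] {d : ℕ} {x : Fin d → Q} {i S w} (h : LN x i S w) :
    w ∈ (𝓛 i : Subgroup Q) := by
  induction h with
  | base j => trivial
  | step i S w j h ih => exact commutator_mem_commutator ih trivial

theorem LN.card {Q : Type*} [Group Q] {d : ℕ} {x : Fin d → Q} {i S w} (h : LN x i S w) :
    S.card ≤ i + 1 := by
  induction h with
  | base j => simp
  | step i S w j h ih => exact (Finset.card_insert_le _ _).trans (by lia)

theorem LN.comm {Q : Type*} [Group Q] {d : ℕ} {x : Fin d → Q} {i S w} (h : LN x i S w) :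
    ∀ (N : Subgroup Q) [N.Normal] (j m : ℕ), i + j = m →
      (∀ u ∈ (𝓛 m : Subgroup Q), ∀ s ∈ S, ⁅u, x s⁆ ∈ N) →
      ∀ y ∈ (𝓛 j : Subgroup Q), ⁅w, y⁆ ∈ N := by
  induction h with
  | base s =>
    intro N _ j m hm hN y hy
    rw [zero_add] at hm; subst hm
    exact comm_swap_mem _ (hN y hy s (by simp))
  | step i S w s h ih =>
    intro N _ j m hm hN y hy
    apply comm_comm_mem
    · apply comm_swap_mem
      refine hN _ ?_ s (by simp)
      apply comm_swap_mem
      rw [← hm, show i + 1 + j = i + j + 1 by ring]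
      exact lcs_comm i j _ (inv_mem h.mem) _ (inv_mem hy)
    · apply comm_inv_left_mem
      refine ih N (j + 1) m (by lia) (fun u hu t ht => hN u hu t (by simp [ht])) _ ?_
      apply comm_swap_mem
      exact commutator_mem_commutator hy trivial

theorem LN.gen {Q : Type*} [Group Q] {d : ℕ} {x : Fin d → Q}
    (hx : Subgroup.closure (Set.range x) = ⊤) (i : ℕ) : ∀ (N : Subgroup Q),
    (𝓛 (i + 1) : Subgroup Q) ≤ N → (∀ S w, LN x i S w → w ∈ N) → (𝓛 i : Subgroup Q) ≤ N := by
  induction i with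
  | zero =>
    intro N _ hN
    rw [Subgroup.lowerCentralSeries_zero, ← hx, closure_le]
    rintro _ ⟨j, rfl⟩
    exact hN _ _ (LN.base j)
  | succ i ih =>
    intro N h1 h2
    let N' : Subgroup Q := N ⊓ 𝓛 (i + 1)
    have hN' : N'.Normal := ⟨fun n hn g => by
      have h3 : ⁅n, g⁆ ∈ (𝓛 (i + 1 + 1) : Subgroup Q) := commutator_mem_commutator hn.2 trivial
      have h4 : g * n * g⁻¹ = ⁅g, n⁆ * n := by simp [commutatorElement_def]
      refine ⟨?_, Normal.conj_mem inferInstance _ hn.2 _⟩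
      rw [h4]
      exact mul_mem (h1 (comm_swap_mem _ h3)) hn.1⟩
    have hle : (𝓛 (i + 1 + 1) : Subgroup Q) ≤ N' :=
      le_inf h1 (Subgroup.lowerCentralSeries_antitone _ (Nat.le_succ _))
    let M : Subgroup Q :=
      { carrier := {u | ∀ y, ⁅u, y⁆ ∈ N'}
        one_mem' := by intro y; simp
        mul_mem' := by intro a b ha hb y; exact comm_mul_left_mem _ (ha y) (hb y)
        inv_mem' := by intro a ha y; exact comm_inv_left_mem _ (ha y) }
    have hM : (𝓛 i : Subgroup Q) ≤ M := by
      apply ih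
      · intro u hu y
        exact hle (commutator_mem_commutator hu trivial)
      · intro S w hw y
        have hy : y ∈ Subgroup.closure (Set.range x) := by rw [hx]; trivial
        apply comm_swap_mem
        induction hy using closure_induction with
        | mem z hz =>
          obtain ⟨j, rfl⟩ := hz
          apply comm_swap_mem
          exact ⟨h2 _ _ (LN.step i S w j hw), (LN.step i S w j hw).mem⟩
        | one => simp
        | mul y z _ _ h1 h2 => exact comm_mul_left_mem _ h1 h2
        | inv y _ h1 => exact comm_inv_left_mem _ h1
    rw [Subgroup.lowerCentralSeries_succ, commutator_le]
    intro u hu y _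
    exact (hM hu y).1

theorem stepQ {Q : Type*} [Group Q] {d : ℕ} (x : Fin d → Q)
    (hx : Subgroup.closure (Set.range x) = ⊤) (i : ℕ)
    (Z' : Subgroup Q) (hZ : Z' ≤ center Q) (hLZ : 𝓛 (i + 1) ≤ Z') (p a : ℕ) (hp : p.Prime)
    (hpa : Z'.relIndex (𝓛 i) = p ^ a) (ha : a ≠ 0) :
    Nat.card (𝓛 (i + 1) : Subgroup Q) * p ^ (d - (i + 1)) ≤ (Z'.relIndex (𝓛 i)) ^ d := by
  have hex : ∃ S w, LN x i S w ∧ w ∉ Z' := by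
    by_contra! hcon
    have := LN.gen hx i Z' hLZ hcon
    rw [← relIndex_eq_one, hpa] at this
    exact ha ((Nat.pow_eq_one.1 this).resolve_left hp.one_lt.ne')
  obtain ⟨S, w, hw, hwZ⟩ := hex
  have hU : ∀ u ∈ (𝓛 i : Subgroup Q), ∀ y, ⁅u, y⁆ ∈ center Q := fun u hu y =>
    hZ (hLZ (commutator_mem_commutator hu trivial))
  let T := Subgroup.closure {q | ∃ u ∈ (𝓛 i : Subgroup Q), ∃ s ∈ S, ⁅u, x s⁆ = q}
  have hT : T ≤ center Q := by
    rw [closure_le]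
    rintro _ ⟨u, hu, s, -, rfl⟩
    exact hU u hu _
  have : T.Normal := ⟨fun n hn g => by
    rw [mem_center_iff.1 (hT hn) g, mul_inv_cancel_right]; exact hn⟩
  have key := lemA (𝓛 i) Z' hU hZ x hx S w hw.mem hwZ (by
    intro j
    refine hw.comm T 0 i rfl ?_ (x j) trivial
    intro u hu s hs
    exact subset_closure ⟨u, hu, s, hs, rfl⟩) p a hp hpa
  refine le_trans (Nat.mul_le_mul le_rfl (Nat.pow_le_pow_right hp.pos ?_)) key
  have := hw.card
  lia

theorem stepH {H : Type*} [Group H] {d : ℕ} (x : Fin d → H)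
    (hx : Subgroup.closure (Set.range x) = ⊤) (i : ℕ)
    (Z : Subgroup H) (hZ : Z ≤ center H) (p a : ℕ) (hp : p.Prime)
    (hpa : (𝓛 (i + 1) ⊔ Z).relIndex (𝓛 i) = p ^ a) (ha : a ≠ 0) :
    (𝓛 (i + 2)).relIndex (𝓛 (i + 1) : Subgroup H) * p ^ (d - (i + 1)) ≤ (p ^ a) ^ d := by
  let W : Subgroup H := 𝓛 (i + 2)
  let π := QuotientGroup.mk' W
  have hπ : Function.Surjective π := QuotientGroup.mk'_surjective W
  have hker : π.ker = W := QuotientGroup.ker_mk' W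
  have hmap : ∀ j, (𝓛 j : Subgroup H).map π = 𝓛 j := by
    intro j
    rw [map_lowerCentralSeries, Subgroup.map_top_of_surjective π hπ]
  have hW1 : W ≤ 𝓛 (i + 1) := Subgroup.lowerCentralSeries_antitone _ (Nat.le_succ _)
  have hW0 : W ≤ 𝓛 i := Subgroup.lowerCentralSeries_antitone _ (by lia)
  have hrel : ((𝓛 (i + 1) ⊔ Z).map π).relIndex (𝓛 i) = p ^ a := by
    rw [← hmap, relIndex_map_map, hker, ← hpa]
    congr 1
    · exact sup_eq_left.2 (hW1.trans le_sup_left)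
    · exact sup_eq_left.2 hW0
  have hbot : (𝓛 (i + 2) : Subgroup (H ⧸ W)) = ⊥ := by
    rw [← hmap, Subgroup.map_eq_bot_iff, hker]
  have key := stepQ (fun j => π (x j)) (by
      rw [show (Set.range fun j => π (x j)) = π '' Set.range x from Set.range_comp π x,
        ← MonoidHom.map_closure, hx, Subgroup.map_top_of_surjective π hπ]) i
    ((𝓛 (i + 1) ⊔ Z).map π) (by
      rw [Subgroup.map_sup, hmap]
      refine sup_le ?_ ?_
      · rw [← commutator_top_right_eq_bot_iff_le_center]
        exact hbot
      · rintro _ ⟨z, hz, rfl⟩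
        rw [mem_center_iff]
        intro g
        obtain ⟨g, rfl⟩ := hπ g
        rw [← map_mul, ← map_mul, mem_center_iff.1 (hZ hz)]) (by
      rw [← hmap]; exact Subgroup.map_mono le_sup_left) p a hp hrel ha
  rw [hrel, ← hmap, ← relIndex_ker, hker] at key
  exact key

theorem baseQ (d : ℕ) : ∀ {Q : Type} [Group Q] (x : Fin d → Q) (Z : Subgroup Q)
    (_ : Z ≤ center Q) (_ : _root_.commutator Q ≤ Z)
    (_ : Subgroup.closure (Set.range x) ⊔ Z = ⊤) (_ : Z.index ≠ 0),
    Nat.card (_root_.commutator Q) ^ 2 * Z.index ≤ Z.index ^ d := by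
  induction d with
  | zero =>
    intro Q _ x Z hZ hc hg hi
    have h1 : Z = ⊤ := by simpa using hg
    subst h1
    have h2 : _root_.commutator Q = ⊥ := by
      rw [commutator_eq_bot_iff_center_eq_top]; exact top_le_iff.1 hZ
    simp [h2]
  | succ d ih =>
    intro Q _ x Z hZ hc hg hi
    have hZn : Z.Normal := ⟨fun n hn g => by
      rw [mem_center_iff.1 (hZ hn) g, mul_inv_cancel_right]; exact hn⟩
    have hcen : ∀ u y : Q, ⁅u, y⁆ ∈ center Q := fun u y =>
      hZ (hc (commutator_mem_commutator trivial trivial))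
    let Y : Subgroup Q := Z ⊔ zpowers (x 0)
    let N : Subgroup Q := ⁅Y, (⊤ : Subgroup Q)⁆
    have hNc : N ≤ _root_.commutator Q := commutator_mono le_top le_rfl
    have hNn : N.Normal := ⟨fun n hn g => by
      rw [mem_center_iff.1 (hZ (hc (hNc hn))) g, mul_inv_cancel_right]; exact hn⟩
    have hZY : Z ≤ Y := le_sup_left
    have hxY : x 0 ∈ Y := (le_sup_right : zpowers (x 0) ≤ Y) (mem_zpowers _)
    have hYi : Y.index ≠ 0 := fun h => hi (by
      rw [← relIndex_mul_index hZY, h, mul_zero])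
    have ho : Z.relIndex Y ≠ 0 := fun h => hi (by
      rw [← relIndex_mul_index hZY, h, zero_mul])
    -- `Y` commutes with `Y`
    let c : Q →* Q :=
      { toFun := fun q => ⁅q, x 0⁆
        map_one' := by simp
        map_mul' := fun a b =>
          congrArg Subtype.val ((commHom ⊤ (fun u _ y => hcen u y) (x 0)).map_mul
            ⟨a, trivial⟩ ⟨b, trivial⟩) }
    have hYc : Y ≤ c.ker := by
      refine sup_le ?_ ?_
      · intro z hz
        show ⁅z, x 0⁆ = 1
        rw [commutatorElement_eq_one_iff_mul_comm, mem_center_iff.1 (hZ hz)]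
      · rw [zpowers_le]
        exact commutatorElement_self (x 0)
    have hYcomm : ∀ u ∈ Y, ⁅u, x 0⁆ = 1 := fun u hu => hYc hu
    -- first bound on `N`
    have hN1 : Nat.card N ≤ Y.index := by
      have hle : N ≤ c.range := by
        rw [Subgroup.commutator_le]
        intro u hu y _
        have hu' : Y ≤ (Subgroup.closure {u : Q | ∀ y, ⁅u, y⁆ ∈ c.range}) := by
          refine sup_le ?_ ?_
          · intro z hz
            refine subset_closure fun y => ?_
            have : ⁅z, y⁆ = 1 := by
              rw [commutatorElement_eq_one_iff_mul_comm, mem_center_iff.1 (hZ hz)]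
            rw [this]; exact one_mem _
          · rw [zpowers_le]
            refine subset_closure fun y => ?_
            exact comm_swap_mem _ ⟨y, rfl⟩
        have hrn : c.range.Normal := ⟨fun n hn g => by
          obtain ⟨q, rfl⟩ := hn
          have : c q ∈ center Q := hcen _ _
          rw [mem_center_iff.1 this g, mul_inv_cancel_right]; exact ⟨q, rfl⟩⟩
        have hu2 := hu' hu
        clear hu
        induction hu2 using closure_induction generalizing y with
        | mem z hz => exact hz y
        | one => simp
        | mul a b _ _ h1 h2 => exact comm_mul_left_mem _ (h1 y trivial) (h2 y trivial)
        | inv a _ h1 => exact comm_inv_left_mem _ (h1 y trivial)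
      have h0 : c.ker.index ≠ 0 := fun h => hYi (by
        rw [← relIndex_mul_index hYc, h, mul_zero])
      have h1 : Nat.card c.range ≤ Y.index := by
        rw [← index_ker]
        exact Nat.le_of_dvd (Nat.pos_of_ne_zero hYi) (index_dvd_of_le hYc)
      have : Finite c.range := Nat.finite_of_card_ne_zero (by rwa [← index_ker])
      exact (Nat.card_le_card_of_injective _ (Subgroup.inclusion_injective hle)).trans h1
    -- second bound on `N`
    have hN2 : Nat.card N ≤ Z.relIndex Y ^ d := by
      have := lemA0 Y Z (fun u _ y => hcen u y) hZ (fun j : Fin d => x j.succ) (by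
          rw [eq_top_iff, ← hg]
          refine sup_le ?_ ?_
          · rw [closure_le]
            rintro _ ⟨j, rfl⟩
            refine Fin.cases ?_ (fun j => ?_) j
            · exact subset_closure (Or.inr hYcomm)
            · exact subset_closure (Or.inl ⟨j, rfl⟩)
          · intro z hz
            refine subset_closure (Or.inr fun u _ => ?_)
            rw [commutatorElement_eq_one_iff_mul_comm, mem_center_iff.1 (hZ hz)])
        ∅ 1 (one_mem _) (by intro j; simp) 1 (fun k hk _ => hk) ho
      simpa using this
    -- pass to the quotient
    let π := QuotientGroup.mk' N
    have hπ : Function.Surjective π := QuotientGroup.mk'_surjective N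
    have hker : π.ker = N := QuotientGroup.ker_mk' N
    have hNY : N ≤ Y := hNc.trans (hc.trans hZY)
    have hidx : (Y.map π).index = Y.index := index_map_eq _ hπ (by rw [hker]; exact hNY)
    have hcm : (_root_.commutator Q).map π = _root_.commutator (Q ⧸ N) := by
      rw [_root_.commutator_def, Subgroup.map_commutator, Subgroup.map_top_of_surjective π hπ,
        _root_.commutator_def]
    have key := ih (fun j : Fin d => π (x j.succ)) (Y.map π) (by
        rintro _ ⟨z, hz, rfl⟩
        rw [mem_center_iff]
        intro g
        obtain ⟨g, rfl⟩ := hπ g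
        rw [eq_comm, ← commutatorElement_eq_one_iff_mul_comm, ← map_commutatorElement]
        rw [← MonoidHom.mem_ker, hker]
        exact commutator_mem_commutator hz trivial) (by
        rw [← hcm]; exact Subgroup.map_mono (hc.trans hZY)) (by
        rw [eq_top_iff, ← Subgroup.map_top_of_surjective π hπ, ← hg, Subgroup.map_sup]
        refine sup_le ?_ (le_sup_of_le_right (Subgroup.map_mono hZY))
        rw [MonoidHom.map_closure, closure_le]
        rintro _ ⟨_, ⟨j, rfl⟩, rfl⟩
        refine Fin.cases ?_ (fun j => ?_) j
        · exact (le_sup_right : Y.map π ≤ _) ⟨x 0, hxY, rfl⟩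
        · exact (le_sup_left : _ ≤ _ ⊔ Y.map π) (subset_closure ⟨j, rfl⟩)) (by rwa [hidx])
    rw [hidx, ← hcm, ← relIndex_ker, hker] at key
    have hB : Nat.card (_root_.commutator Q) = Nat.card N * N.relIndex (_root_.commutator Q) := by
      rw [← relIndex_bot_left, ← relIndex_bot_left, relIndex_mul_relIndex _ _ _ bot_le hNc]
    have hZi : Z.index = Z.relIndex Y * Y.index := (relIndex_mul_index hZY).symm
    rw [hB, hZi]
    generalize Nat.card N = n at *
    generalize N.relIndex (_root_.commutator Q) = b at *
    generalize Z.relIndex Y = o at *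
    generalize Y.index = y at *
    calc (n * b) ^ 2 * (o * y) = (n * n) * o * (b ^ 2 * y) := by ring
      _ ≤ (y * o ^ d) * o * y ^ d :=
        Nat.mul_le_mul (Nat.mul_le_mul_right _ (Nat.mul_le_mul hN1 hN2)) key
      _ = (o * y) ^ (d + 1) := by ring

theorem baseH {H : Type} [Group H] {d : ℕ} (x : Fin d → H)
    (hx : Subgroup.closure (Set.range x) = ⊤)
    (Z : Subgroup H) (hZ : Z ≤ center H) (hi : (𝓛 1 ⊔ Z).index ≠ 0) :
    (𝓛 2).relIndex (𝓛 1 : Subgroup H) ^ 2 * (𝓛 1 ⊔ Z).index ≤ (𝓛 1 ⊔ Z).index ^ d := by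
  let W : Subgroup H := 𝓛 2
  let π := QuotientGroup.mk' W
  have hπ : Function.Surjective π := QuotientGroup.mk'_surjective W
  have hker : π.ker = W := QuotientGroup.ker_mk' W
  have hmap : ∀ j, (𝓛 j : Subgroup H).map π = 𝓛 j := by
    intro j
    rw [map_lowerCentralSeries, Subgroup.map_top_of_surjective π hπ]
  have hW1 : W ≤ 𝓛 1 := Subgroup.lowerCentralSeries_antitone _ (Nat.le_succ _)
  have hidx : ((𝓛 1 ⊔ Z).map π).index = (𝓛 1 ⊔ Z).index := 
    index_map_eq _ hπ (by rw [hker]; exact hW1.trans le_sup_left)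
  have hbot : (𝓛 2 : Subgroup (H ⧸ W)) = ⊥ := by
    rw [← hmap, Subgroup.map_eq_bot_iff, hker]
  have key := baseQ d (fun j => π (x j)) ((𝓛 1 ⊔ Z).map π) (by
      rw [Subgroup.map_sup, hmap]
      refine sup_le ?_ ?_
      · rw [← commutator_top_right_eq_bot_iff_le_center]
        exact hbot
      · rintro _ ⟨z, hz, rfl⟩
        rw [mem_center_iff]
        intro g
        obtain ⟨g, rfl⟩ := hπ g
        rw [← map_mul, ← map_mul, mem_center_iff.1 (hZ hz)]) (by
      rw [← Subgroup.top_lowerCentralSeries_one, ← hmap]; exact Subgroup.map_mono le_sup_left) (by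
      rw [show (Set.range fun j => π (x j)) = π '' Set.range x from Set.range_comp π x,
        ← MonoidHom.map_closure, hx, Subgroup.map_top_of_surjective π hπ, top_sup_eq])
      (by rwa [hidx])
  rw [hidx, ← Subgroup.top_lowerCentralSeries_one, ← hmap, ← relIndex_ker, hker] at key
  exact key

theorem telescope {Q : Type*} [Group Q] (a m : ℕ) :
    ∏ j ∈ Finset.range m, (𝓛 (a + j + 1)).relIndex (𝓛 (a + j) : Subgroup Q)
      = (𝓛 (a + m)).relIndex (𝓛 a : Subgroup Q) := by
  induction m with
  | zero => simp
  | succ m ih =>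
    rw [Finset.prod_range_succ, ih, mul_comm]
    exact relIndex_mul_relIndex _ _ _
      (Subgroup.lowerCentralSeries_antitone _ (by omega))
      (Subgroup.lowerCentralSeries_antitone _ (by omega))

theorem lcs_map {H G : Type*} [Group H] [Group G] (π : H →* G) (hπ : Function.Surjective π)
    (i : ℕ) : (𝓛 i : Subgroup H).map π = 𝓛 i := by
  rw [map_lowerCentralSeries, Subgroup.map_top_of_surjective π hπ]

theorem relIndex_quot {H G : Type*} [Group H] [Group G] (π : H →* G)
    (hπ : Function.Surjective π) (i j : ℕ) :
    (𝓛 i ⊔ π.ker).relIndex (𝓛 j : Subgroup H) = (𝓛 i).relIndex (𝓛 j : Subgroup G) := by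
  rw [← Subgroup.comap_map_eq, relIndex_comap, lcs_map π hπ, lcs_map π hπ]

theorem lcs_stab {G : Type*} [Group G] (i : ℕ) (h : (𝓛 i : Subgroup G) ≤ 𝓛 (i + 1)) (j : ℕ) :
    (𝓛 i : Subgroup G) ≤ 𝓛 (i + j) := by
  induction j with
  | zero => exact le_rfl
  | succ j ih =>
    refine h.trans ?_
    rw [← add_assoc]
    exact commutator_mono ih le_rfl

theorem ext_bound {H G : Type} [Group H] [Group G] [Finite G] (π : H →* G)
    (hπ : Function.Surjective π) (hker : π.ker ≤ center H) {d : ℕ} (x : Fin d → H)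
    (hx : Subgroup.closure (Set.range x) = ⊤) (p n k m : ℕ) (hp : p.Prime)
    (hG : Nat.card G = p ^ n) (hk : Nat.card (𝓛 1 : Subgroup G) = p ^ k)
    (hbot : (𝓛 (m + 1) : Subgroup G) = ⊥) (hne : (𝓛 m : Subgroup G) ≠ ⊥) :
    Nat.card (𝓛 1 : Subgroup H) ^ 2 * (𝓛 1 : Subgroup G).index
      * p ^ (2 * ∑ j ∈ Finset.range m, (d - (j + 2)))
      ≤ (𝓛 1 : Subgroup G).index ^ d * (p ^ k) ^ (2 * d) := by
  have hr : ∀ i ≤ m, ∃ a, a ≠ 0 ∧ (𝓛 (i + 1)).relIndex (𝓛 i : Subgroup G) = p ^ a := by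
    intro i hi
    have h1 : (𝓛 (i + 1)).relIndex (𝓛 i : Subgroup G) ∣ p ^ n :=
      hG ▸ (relIndex_dvd_card _ _).trans (Subgroup.card_subgroup_dvd_card _)
    obtain ⟨a, -, ha⟩ := (Nat.dvd_prime_pow hp).1 h1
    refine ⟨a, ?_, ha⟩
    rintro rfl
    rw [pow_zero, relIndex_eq_one] at ha
    have h2 := lcs_stab i ha (m + 1 - i)
    rw [show i + (m + 1 - i) = m + 1 by omega, hbot, le_bot_iff] at h2
    have h3 := Subgroup.lowerCentralSeries_antitone (⊤ : Subgroup G) hi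
    rw [h2, le_bot_iff] at h3
    exact hne h3
  have hb := baseH x hx π.ker hker (by
    have := relIndex_quot π hπ 1 0
    simp only [Subgroup.lowerCentralSeries_zero, relIndex_top_right] at this
    rw [this]
    exact index_ne_zero_of_finite)
  have hq0 : (𝓛 1 ⊔ π.ker).index = (𝓛 1 : Subgroup G).index := by
    have := relIndex_quot π hπ 1 0
    simpa only [Subgroup.lowerCentralSeries_zero, relIndex_top_right] using this
  rw [hq0] at hb
  have hs : ∀ j ∈ Finset.range m, (𝓛 (1 + (j + 1) + 1)).relIndex (𝓛 (1 + (j + 1)) : Subgroup H)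
      * p ^ (d - (j + 2)) ≤ ((𝓛 (1 + j + 1)).relIndex (𝓛 (1 + j) : Subgroup G)) ^ d := by
    intro j hj
    rw [Finset.mem_range] at hj
    obtain ⟨a, ha, hra⟩ := hr (j + 1) (by omega)
    have h1 := stepH x hx (j + 1) π.ker hker p a hp (by rw [relIndex_quot π hπ, hra]) ha
    rw [show 1 + (j + 1) = j + 2 by ring, show 1 + j = j + 1 by ring, hra]
    exact h1
  have hprod := Finset.prod_le_prod' hs
  rw [Finset.prod_mul_distrib, Finset.prod_pow_eq_pow_sum, Finset.prod_pow, telescope,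
    show 1 + m = m + 1 by ring, hbot, relIndex_bot_left, hk] at hprod
  have hHbot : (𝓛 (1 + (m + 1)) : Subgroup H) = ⊥ := by
    rw [add_comm]
    apply Subgroup.lowerCentralSeries_succ_eq_bot
    refine le_trans ?_ hker
    rw [← Subgroup.map_eq_bot_iff, lcs_map π hπ, hbot]
  have hH : Nat.card (𝓛 1 : Subgroup H) = (∏ j ∈ Finset.range m,
      (𝓛 (1 + (j + 1) + 1)).relIndex (𝓛 (1 + (j + 1)) : Subgroup H))
        * (𝓛 2).relIndex (𝓛 1 : Subgroup H) := by
    have := telescope (Q := H) 1 (m + 1)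
    rw [hHbot, relIndex_bot_left, Finset.prod_range_succ'] at this
    exact this.symm
  rw [hH]
  generalize (∏ j ∈ Finset.range m,
      (𝓛 (1 + (j + 1) + 1)).relIndex (𝓛 (1 + (j + 1)) : Subgroup H)) = A at *
  generalize (𝓛 2).relIndex (𝓛 1 : Subgroup H) = B at *
  generalize (𝓛 1 : Subgroup G).index = r at *
  generalize (∑ j ∈ Finset.range m, (d - (j + 2))) = s at *
  calc (A * B) ^ 2 * r * p ^ (2 * s) = (B ^ 2 * r) * (A * p ^ s) ^ 2 := by ring
    _ ≤ r ^ d * ((p ^ k) ^ d) ^ 2 := Nat.mul_le_mul hb (Nat.pow_le_pow_left hprod 2)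
    _ = r ^ d * (p ^ k) ^ (2 * d) := by ring

/-- the underlying set `G × A` of the extension of `G` by `A` given by a factor set -/
structure CExt (G A : Type*) where
  /-- the component in the quotient -/
  fst : G
  /-- the component in the kernel -/
  snd : A

/-- the central extension defined by a 2-cocycle -/
@[reducible] def CExt.group {G A : Type*} [Group G] [CommGroup A] (f : G × G → A)
    (hf : ∀ a b c : G, f (a * b, c) * f (a, b) = f (b, c) * f (a, b * c)) : Group (CExt G A) :=
  have h1 : ∀ g, f (1, g) = f (1, 1) := fun g => by
    have := hf 1 1 g
    simp only [one_mul] at this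
    exact (mul_left_cancel this).symm
  letI : Mul (CExt G A) := ⟨fun x y => ⟨x.fst * y.fst, x.snd * y.snd * f (x.fst, y.fst)⟩⟩
  letI : Inv (CExt G A) :=
    ⟨fun x => ⟨x.fst⁻¹, x.snd⁻¹ * (f (x.fst⁻¹, x.fst))⁻¹ * (f (1, 1))⁻¹⟩⟩
  letI : One (CExt G A) := ⟨⟨1, (f (1, 1))⁻¹⟩⟩
  Group.ofLeftAxioms
    (by
      intro x y z
      change CExt.mk _ _ = CExt.mk _ _
      congr 1
      · exact mul_assoc _ _ _
      · have := hf x.fst y.fst z.fst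
        change x.snd * y.snd * f (x.fst, y.fst) * z.snd * f (x.fst * y.fst, z.fst)
          = x.snd * (y.snd * z.snd * f (y.fst, z.fst)) * f (x.fst, y.fst * z.fst)
        calc _ = x.snd * y.snd * z.snd * (f (x.fst * y.fst, z.fst) * f (x.fst, y.fst)) := by
              simp only [mul_assoc, mul_comm, mul_left_comm]
          _ = _ := by rw [this]; simp only [mul_assoc])
    (by
      intro x
      change CExt.mk _ _ = x
      obtain ⟨g, a⟩ := x
      congr 1
      · exact one_mul _
      · change (f (1, 1))⁻¹ * a * f (1, g) = a
        rw [h1 g, mul_comm, mul_inv_cancel_left])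
    (by
      intro x
      change CExt.mk _ _ = CExt.mk _ _
      congr 1
      · exact inv_mul_cancel _
      · change x.snd⁻¹ * (f (x.fst⁻¹, x.fst))⁻¹ * (f (1, 1))⁻¹ * x.snd * f (x.fst⁻¹, x.fst)
          = (f (1, 1))⁻¹
        rw [mul_right_comm _ _ x.snd, mul_right_comm _ _ x.snd, inv_mul_cancel, one_mul,
          mul_right_comm, inv_mul_cancel, one_mul])

/-- the free presentation map -/
abbrev pres {G : Type} [Group G] {d : ℕ} (x : Fin d → G) : FreeGroup (Fin d) →* G :=
  FreeGroup.lift x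

/-- the covering extension `F / [R, F]` -/
abbrev Cov {G : Type} [Group G] {d : ℕ} (x : Fin d → G) : Type :=
  FreeGroup (Fin d) ⧸ ⁅(pres x).ker, (⊤ : Subgroup (FreeGroup (Fin d)))⁆

theorem comm_le_ker {G : Type} [Group G] {d : ℕ} (x : Fin d → G) :
    ⁅(pres x).ker, (⊤ : Subgroup (FreeGroup (Fin d)))⁆ ≤ (pres x).ker :=
  Subgroup.commutator_le_left _ _

/-- the projection of the covering extension -/
def cov {G : Type} [Group G] {d : ℕ} (x : Fin d → G) : Cov x →* G :=
  QuotientGroup.lift _ (pres x) (comm_le_ker x)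

theorem cov_mk {G : Type} [Group G] {d : ℕ} (x : Fin d → G) (w : FreeGroup (Fin d)) :
    cov x (QuotientGroup.mk w) = pres x w := rfl

theorem cov_ker {G : Type} [Group G] {d : ℕ} (x : Fin d → G) :
    (cov x).ker ≤ center (Cov x) := by
  intro z hz
  induction z using QuotientGroup.induction_on with | _ w
  rw [mem_center_iff]
  intro y
  induction y using QuotientGroup.induction_on with | _ v
  rw [← QuotientGroup.mk_mul, ← QuotientGroup.mk_mul, QuotientGroup.eq]
  have : (v * w)⁻¹ * (w * v) = ⁅w⁻¹, v⁻¹⁆ := by simp [commutatorElement_def, mul_assoc]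
  rw [this]
  exact commutator_mem_commutator (inv_mem hz) trivial

theorem cov_gen {G : Type} [Group G] {d : ℕ} (x : Fin d → G) :
    Subgroup.closure (Set.range fun i => (QuotientGroup.mk (FreeGroup.of i) : Cov x)) = ⊤ := by
  have h := FreeGroup.closure_range_of (Fin d)
  have h2 := congrArg (Subgroup.map (QuotientGroup.mk'
    ⁅(pres x).ker, (⊤ : Subgroup (FreeGroup (Fin d)))⁆)) h
  rw [MonoidHom.map_closure, Subgroup.map_top_of_surjective _ (QuotientGroup.mk'_surjective _),
    ← Set.range_comp] at h2
  exact h2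

theorem cov_surj {G : Type} [Group G] {d : ℕ} (x : Fin d → G)
    (hx : Subgroup.closure (Set.range x) = ⊤) : Function.Surjective (cov x) := by
  rw [← MonoidHom.range_eq_top, eq_top_iff, ← hx, closure_le]
  rintro _ ⟨i, rfl⟩
  exact ⟨QuotientGroup.mk (FreeGroup.of i), by rw [cov_mk]; simp⟩

theorem exists_u {G : Type} {A : Type*} [Group G] [CommGroup A] {d : ℕ} (x : Fin d → G)
    (f : G × G → A)
    (hf : ∀ a b c : G, f (a * b, c) * f (a, b) = f (b, c) * f (a, b * c)) :
    ∃ u : Cov x → A, ∀ a b, u (a * b) = u a * u b * f (cov x a, cov x b) := by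
  let _ := CExt.group f hf
  have h1 : ∀ g, f (1, g) = f (1, 1) := fun g => by
    have := hf 1 1 g
    simp only [one_mul] at this
    exact (mul_left_cancel this).symm
  have h2 : ∀ g, f (g, 1) = f (1, 1) := fun g => by
    have := hf g 1 1
    simp only [mul_one] at this
    exact (mul_right_cancel this)
  let Θ : FreeGroup (Fin d) →* CExt G A := FreeGroup.lift fun i => ⟨x i, 1⟩
  let q : CExt G A →* G :=
    { toFun := CExt.fst
      map_one' := rfl
      map_mul' := fun _ _ => rfl }
  have hq : q.comp Θ = pres x := by
    ext i
    simp [Θ, q]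
  have hN : ⁅(pres x).ker, (⊤ : Subgroup (FreeGroup (Fin d)))⁆ ≤ Θ.ker := by
    rw [commutator_le]
    intro r hr v _
    rw [MonoidHom.mem_ker, map_commutatorElement, commutatorElement_eq_one_iff_mul_comm]
    rw [MonoidHom.mem_ker, ← hq] at hr
    have hr' : (Θ r).fst = 1 := hr
    generalize Θ r = s at hr'
    generalize Θ v = t
    change CExt.mk _ _ = CExt.mk _ _
    congr 1
    · rw [hr', one_mul, mul_one]
    · rw [hr', h1 t.fst, h2 t.fst, mul_comm s.snd]
  let Θ' : Cov x →* CExt G A := QuotientGroup.lift _ Θ hN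
  have hΘ : ∀ a, (Θ' a).fst = cov x a := by
    intro a
    induction a using QuotientGroup.induction_on with | _ w
    exact DFunLike.congr_fun hq w
  refine ⟨fun a => (Θ' a).snd, fun a b => ?_⟩
  dsimp only
  rw [map_mul, ← hΘ, ← hΘ]
  rfl

theorem baer_units : Module.Baer ℤ (Additive ℂˣ) := by
  have : DivisibleBy (Additive ℂˣ) ℤ := by
    have hN : ∀ n : ℕ, n ≠ 0 → ∀ y : ℂˣ, ∃ z : ℂˣ, z ^ n = y := by
      intro n hn y
      obtain ⟨z, hz⟩ := IsAlgClosed.exists_pow_nat_eq (y : ℂ) (Nat.pos_of_ne_zero hn)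
      have hz0 : z ≠ 0 := by
        rintro rfl
        rw [zero_pow hn] at hz
        exact y.ne_zero hz.symm
      exact ⟨Units.mk0 z hz0, Units.ext (by simpa using hz)⟩
    apply divisibleByOfSMulRightSurj
    intro n hn y
    obtain ⟨z, hz⟩ := hN n.natAbs (by simpa using hn) y.toMul
    rcases Int.natAbs_eq n with h | h
    · refine ⟨Additive.ofMul z, ?_⟩
      dsimp only
      rw [h, natCast_zsmul]
      exact congrArg Additive.ofMul hz
    · refine ⟨Additive.ofMul z⁻¹, ?_⟩
      dsimp only
      rw [h, neg_smul, natCast_zsmul, ofMul_inv, neg_nsmul, neg_neg]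
      exact congrArg Additive.ofMul hz
  exact Module.Baer.of_divisible _

theorem extend_char {H : Type} [Group H] (Z : Subgroup H) (φ : Z →* ℂˣ)
    (hφ : ∀ z : Z, (z : H) ∈ _root_.commutator H → φ z = 1) :
    ∃ χ : H →* ℂˣ, ∀ z : Z, χ z = φ z := by
  let q : Z →* Abelianization H := Abelianization.of.comp Z.subtype
  have hk : q.rangeRestrict.ker ≤ φ.ker := by
    intro z hz
    rw [MonoidHom.ker_rangeRestrict, MonoidHom.mem_ker] at hz
    refine hφ z ?_
    rw [← Abelianization.ker_of]
    exact hz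
  let φ' := q.rangeRestrict.liftOfSurjective q.rangeRestrict_surjective ⟨φ, hk⟩
  have hφ' : ∀ z, φ' (q.rangeRestrict z) = φ z := fun z =>
    MonoidHom.liftOfRightInverse_comp_apply _ _ _ ⟨φ, hk⟩ z
  obtain ⟨h, hh⟩ := baer_units.extension_property_addMonoidHom
    (MonoidHom.toAdditive q.range.subtype) (q.range.subtype_injective)
    (MonoidHom.toAdditive φ')
  refine ⟨(MonoidHom.toAdditive.symm h).comp Abelianization.of, fun z => ?_⟩
  rw [← hφ']
  exact congrArg Additive.toMul (DFunLike.congr_fun hh (Additive.ofMul (q.rangeRestrict z)))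

theorem key_inj {H G : Type} [Group H] [Group G] (π : H →* G) (hπ : Function.Surjective π)
    (f : G × G → ℂˣ) (v : H → ℂˣ)
    (hv : ∀ a b, v (a * b) = v a * v b * f (π a, π b))
    (h1 : ∀ z ∈ π.ker ⊓ _root_.commutator H, v z = v 1) :
    ∃ w : G → ℂˣ, ∀ g h, f (g, h) * (w g * w h) = w (g * h) := by
  have hf : ∀ a, f (π a, 1) = (v 1)⁻¹ := by
    intro a
    have := hv a 1
    rw [mul_one, map_one, mul_assoc, left_eq_mul] at this
    exact eq_inv_of_mul_eq_one_right this
  have hvz : ∀ a, ∀ z ∈ π.ker, v (a * z) = v a * (v z * (v 1)⁻¹) := by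
    intro a z hz
    rw [MonoidHom.mem_ker] at hz
    rw [hv, hz, hf, mul_assoc]
  let φ : π.ker →* ℂˣ :=
    { toFun := fun z => v z * (v 1)⁻¹
      map_one' := by simp
      map_mul' := fun a b => by
        rw [Subgroup.coe_mul, hvz _ _ b.2]
        exact mul_right_comm _ _ _ }
  obtain ⟨χ, hχ⟩ := extend_char π.ker φ (fun z hz => by
    change v z * (v 1)⁻¹ = 1
    rw [h1 _ ⟨z.2, hz⟩, mul_inv_cancel])
  have hw : ∀ a b, π a = π b → v a * (χ a)⁻¹ = v b * (χ b)⁻¹ := by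
    intro a b hab
    have hz : b⁻¹ * a ∈ π.ker := by rw [MonoidHom.mem_ker, map_mul, map_inv, hab, inv_mul_cancel]
    have h2 := hvz b _ hz
    have h3 : χ (b⁻¹ * a) = v (b⁻¹ * a) * (v 1)⁻¹ := hχ ⟨_, hz⟩
    rw [← h3, mul_inv_cancel_left, map_mul, map_inv] at h2
    rw [h2, mul_assoc, mul_inv_cancel_right]
  let s := Function.surjInv hπ
  have hs : ∀ g, π (s g) = g := Function.surjInv_eq hπ
  refine ⟨fun g => v (s g) * (χ (s g))⁻¹, fun g h => ?_⟩
  dsimp only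
  rw [hw (s (g * h)) (s g * s h) (by rw [map_mul, hs, hs, hs]), hv, hs, hs, map_mul, mul_inv]
  simp only [mul_assoc, mul_comm, mul_left_comm]

theorem finite_comm {H G : Type} [Group H] [Group G] [Finite G] (π : H →* G)
    (hker : π.ker ≤ center H) : Finite (_root_.commutator H) := by
  have hcomm : ∀ a b a' b' : H, π a = π a' → π b = π b' → ⁅a, b⁆ = ⁅a', b'⁆ := by
    have hl : ∀ a b a' : H, π a = π a' → ⁅a, b⁆ = ⁅a', b⁆ := by
      intro a b a' h
      have hz : a'⁻¹ * a ∈ π.ker := by rw [MonoidHom.mem_ker, map_mul, map_inv, h, inv_mul_cancel]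
      have hz' := mem_center_iff.1 (hker hz)
      obtain ⟨z, rfl⟩ : ∃ z, a = a' * z := ⟨a'⁻¹ * a, by simp⟩
      rw [inv_mul_cancel_left] at hz'
      rw [commutatorElement_mul_left_eq_conj_mul,
        commutatorElement_eq_one_iff_mul_comm.2 (hz' b).symm]
      simp
    intro a b a' b' h h'
    rw [hl a b a' h, ← commutatorElement_inv, hl b a' b' h', commutatorElement_inv]
  have : Finite (commutatorSet H) := by
    let F : π.range × π.range → H := fun q => ⁅q.1.2.choose, q.2.2.choose⁆
    refine Set.Finite.subset (Set.finite_range F) ?_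
    rintro _ ⟨a, b, rfl⟩
    refine ⟨(⟨π a, a, rfl⟩, ⟨π b, b, rfl⟩), ?_⟩
    apply hcomm
    · exact (⟨π a, a, rfl⟩ : π.range).2.choose_spec
    · exact (⟨π b, b, rfl⟩ : π.range).2.choose_spec
  infer_instance

theorem card_mult_le {G : Type} [Group G] [Finite G] {d : ℕ} (x : Fin d → G)
    (hx : Subgroup.closure (Set.range x) = ⊤) :
    Nat.card (schurMultiplier G) ≤
      Nat.card ((cov x).ker ⊓ _root_.commutator (Cov x) : Subgroup (Cov x)) := by
  have hfin := finite_comm (cov x) (cov_ker x)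
  set K : Subgroup (Cov x) := (cov x).ker ⊓ _root_.commutator (Cov x) with hK
  have hKfin : Finite K := Finite.of_injective (Subgroup.inclusion (inf_le_right : K ≤ _))
    (Subgroup.inclusion_injective _)
  let _ : CommGroup K :=
    { (inferInstance : Group K) with
      mul_comm := fun a b => Subtype.ext
        (mem_center_iff.1 (cov_ker x (inf_le_left (a := (cov x).ker) b.2)) a) }
  let A : Rep ℤ G := Rep.trivial ℤ G (Additive ℂˣ)
  have hcard : Nat.card (K →* ℂˣ) = Nat.card K :=
    CommGroup.card_monoidHom_of_hasEnoughRootsOfUnity K ℂ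
  rw [← hcard]
  have hKf : Finite (K →* ℂˣ) := by
    apply Nat.finite_of_card_ne_zero
    rw [hcard]
    exact Nat.card_pos.ne'
  have hrep : ∀ m : schurMultiplier G, ∃ y : groupCohomology.cocycles₂ A,
      groupCohomology.H2π A y = m := by
    intro m
    exact groupCohomology.H2_induction_on (A := A)
      (C := fun m => ∃ y : groupCohomology.cocycles₂ A, groupCohomology.H2π A y = m) m
      fun y => ⟨y, rfl⟩
  choose y hy using hrep
  let f : schurMultiplier G → G × G → ℂˣ := fun m q => Additive.toMul ((y m).1 q)
  have hf : ∀ m, ∀ a b c : G,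
      f m (a * b, c) * f m (a, b) = f m (b, c) * f m (a, b * c) := by
    intro m a b c
    exact (groupCohomology.mem_cocycles₂_iff (A := A) _).1 (y m).2 a b c
  choose u hu using fun m => exists_u x (f m) (hf m)
  have hu1 : ∀ m, u m 1 * f m (1, 1) = 1 := by
    intro m
    have := hu m 1 1
    rw [mul_one, map_one, mul_assoc, left_eq_mul] at this
    exact this
  let Φ : schurMultiplier G → (K →* ℂˣ) := fun m =>
    { toFun := fun z => u m z * (u m 1)⁻¹
      map_one' := by simp
      map_mul' := fun a b => by
        have ha : cov x a = 1 := a.2.1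
        have hb : cov x b = 1 := b.2.1
        have h1 : f m (1, 1) = (u m 1)⁻¹ := eq_inv_of_mul_eq_one_right (hu1 m)
        change u m ((a : Cov x) * b) * (u m 1)⁻¹ = _
        rw [hu, ha, hb, h1]
        simp only [mul_assoc, mul_comm, mul_left_comm] }
  apply Nat.card_le_card_of_injective Φ
  intro m m' hmm
  obtain ⟨w, hw⟩ := key_inj (cov x) (cov_surj x hx) (fun q => f m q / f m' q)
    (fun a => u m a / u m' a)
    (fun a b => by
      rw [hu, hu]
      simp only [mul_div_mul_comm])
    (fun z hz => by
      have := DFunLike.congr_fun hmm ⟨z, hz⟩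
      have h2 : u m z * (u m 1)⁻¹ = u m' z * (u m' 1)⁻¹ := this
      rw [← div_eq_mul_inv, ← div_eq_mul_inv, div_eq_div_iff_mul_eq_mul] at h2
      rw [div_eq_div_iff_mul_eq_mul, h2, mul_comm])
  rw [← hy m, ← hy m']
  refine (groupCohomology.H2π_eq_iff (A := A) (y m) (y m')).2 ?_
  refine ⟨fun g => (Additive.ofMul ((w g)⁻¹ : ℂˣ) : Additive ℂˣ), ?_⟩
  funext q
  obtain ⟨g, h⟩ := q
  have h3 : f m (g, h) / f m' (g, h) = (w h)⁻¹ / (w (g * h))⁻¹ * (w g)⁻¹ := by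
    rw [eq_mul_inv_of_mul_eq (hw g h), mul_inv, div_inv_eq_mul]
    simp only [mul_comm, mul_left_comm]
  exact h3.symm

theorem main_nat (p n k m d : ℕ) (hp : p.Prime) (G : Type) [Group G] [Finite G]
    (hcard : Nat.card G = p ^ n) (hk : Nat.card (_root_.commutator G) = p ^ k)
    (hd : Group.rank G = d)
    (hbot : (𝓛 (m + 1) : Subgroup G) = ⊥) (hne : (𝓛 m : Subgroup G) ≠ ⊥) :
    k ≤ n ∧ (Nat.card (schurMultiplier G) * p ^ k) ^ 2 * p ^ (n - k)
      * p ^ (2 * ∑ j ∈ Finset.range m, (d - (j + 2))) ≤ (p ^ (n - k)) ^ d * (p ^ k) ^ (2 * d) := by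
  obtain ⟨x, hx⟩ : ∃ x : Fin d → G, Subgroup.closure (Set.range x) = ⊤ := by
    obtain ⟨S, hS, hS'⟩ := Group.rank_spec G
    rw [hd] at hS
    refine ⟨fun i => ((S.equivFinOfCardEq hS).symm i : G), ?_⟩
    rw [← hS']
    congr 1
    ext g
    constructor
    · rintro ⟨i, rfl⟩
      exact ((S.equivFinOfCardEq hS).symm i).2
    · intro hg
      exact ⟨S.equivFinOfCardEq hS ⟨g, hg⟩, by simp⟩
  have hc1 : (𝓛 1 : Subgroup G) = _root_.commutator G := Subgroup.top_lowerCentralSeries_one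
  have hcH : (𝓛 1 : Subgroup (Cov x)) = _root_.commutator (Cov x) :=
    Subgroup.top_lowerCentralSeries_one
  have hidx := (_root_.commutator G).index_mul_card
  rw [hk, hcard] at hidx
  have hkn : k ≤ n := (Nat.pow_dvd_pow_iff_le_right hp.one_lt).1 (Dvd.intro_left _ hidx)
  have hidx' : (_root_.commutator G).index = p ^ (n - k) := by
    apply Nat.eq_of_mul_eq_mul_right (pow_pos hp.pos k)
    rw [hidx, ← pow_add, Nat.sub_add_cancel hkn]
  refine ⟨hkn, ?_⟩
  have hsurj := cov_surj x hx
  have h := ext_bound (cov x) hsurj (cov_ker x) _ (cov_gen x) p n k m hp hcard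
    (by rw [hc1, hk]) hbot hne
  rw [hc1, hidx'] at h
  refine le_trans ?_ h
  have hM := card_mult_le x hx
  have hH : Nat.card (𝓛 1 : Subgroup (Cov x)) =
      Nat.card ((cov x).ker ⊓ _root_.commutator (Cov x) : Subgroup (Cov x)) * p ^ k := by
    have h1 := relIndex_mul_relIndex ⊥
      ((cov x).ker ⊓ _root_.commutator (Cov x)) (_root_.commutator (Cov x)) bot_le inf_le_right
    rw [inf_relIndex_right, relIndex_ker, relIndex_bot_left, relIndex_bot_left, ← hcH,
      lcs_map _ hsurj, hc1, hk] at h1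
    rw [← h1, hcH]
  rw [hH]
  gcongr

theorem sum_sub (m d : ℕ) (h : m + 1 ≤ d) :
    (2 : ℝ) * ((∑ j ∈ Finset.range m, (d - (j + 2)) : ℕ) : ℝ) = m * (2 * d - (m + 3)) := by
  induction m with
  | zero => simp
  | succ m ih =>
    rw [Finset.sum_range_succ, Nat.cast_add, mul_add, ih (by omega), Nat.cast_sub (by omega)]
    push_cast
    ring

theorem main_real (p n k m d M : ℕ) (hp : p.Prime) (hmd : m + 1 ≤ d) (hkn : k ≤ n)
    (h : (M * p ^ k) ^ 2 * p ^ (n - k)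
      * p ^ (2 * ∑ j ∈ Finset.range m, (d - (j + 2))) ≤ (p ^ (n - k)) ^ d * (p ^ k) ^ (2 * d)) :
    (M : ℝ) ≤ (p : ℝ) ^ (((d : ℝ) - 1) * ((n : ℝ) + (k : ℝ)) / 2
        - ((m + 1 : ℝ) - 1) * (2 * (d : ℝ) - ((m + 1 : ℝ) + 2)) / 2) := by
  have hp0 : (0 : ℝ) < p := by exact_mod_cast hp.pos
  have hs := sum_sub m d hmd
  generalize (∑ j ∈ Finset.range m, (d - (j + 2))) = s at *
  have h1 : M ^ 2 * p ^ (2 * k + (n - k) + 2 * s) ≤ p ^ ((n - k) * d + k * (2 * d)) := by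
    calc _ = (M * p ^ k) ^ 2 * p ^ (n - k) * p ^ (2 * s) := by ring
      _ ≤ _ := h
      _ = _ := by ring
  have h2 : (M : ℝ) ^ 2 * (p : ℝ) ^ (2 * k + (n - k) + 2 * s)
      ≤ (p : ℝ) ^ ((n - k) * d + k * (2 * d)) := by exact_mod_cast h1
  rw [← Real.rpow_natCast (p : ℝ), ← Real.rpow_natCast (p : ℝ), ← le_div_iff₀ (by positivity),
    ← Real.rpow_sub hp0] at h2
  refine le_of_sq_le_sq ?_ (by positivity)
  refine h2.trans (le_of_eq ?_)
  rw [← Real.rpow_natCast (_ ^ _) 2, ← Real.rpow_mul hp0.le]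
  congr 1
  push_cast [Nat.cast_sub hkn]
  linear_combination -hs

theorem comm_of_bot {G : Type*} [Group G] (h : (𝓛 1 : Subgroup G) = ⊥) (a b : G) :
    a * b = b * a := by
  have h3 : ⁅a, b⁆ ∈ (𝓛 1 : Subgroup G) := commutator_mem_commutator trivial trivial
  rw [h, Subgroup.mem_bot] at h3
  exact commutatorElement_eq_one_iff_mul_comm.1 h3

end SchurBound

/-- Theorem 1, the case `d ≥ c`:
`|M(G)| ≤ p ^ ((d - 1) * (n + k) / 2 - (c - 1) * (2 * d - (c + 2)) / 2)`. -/
theorem schur_multiplier_bound_of_class_le_d (p n k c d : ℕ) (hp : p.Prime)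
    (G : Type) [Group G] [Finite G] [Group.IsNilpotent G]
    (hcard : Nat.card G = p ^ n)
    (hna : ∃ a b : G, a * b ≠ b * a)
    (hc : Group.nilpotencyClass G = c)
    (hk : Nat.card (commutator G) = p ^ k)
    (hd : Group.rank G = d)
    (hcd : c ≤ d) :
    (Nat.card (schurMultiplier G) : ℝ) ≤
      (p : ℝ) ^ (((d : ℝ) - 1) * ((n : ℝ) + (k : ℝ)) / 2
        - ((c : ℝ) - 1) * (2 * (d : ℝ) - ((c : ℝ) + 2)) / 2) := by
  have h2 : 2 ≤ c := by
    by_contra hlt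
    have h1 : Subgroup.lowerCentralSeries (⊤ : Subgroup G) 1 = ⊥ :=
      Subgroup.lowerCentralSeries_eq_bot_iff_nilpotencyClass_le.2 (by omega)
    obtain ⟨a, b, hab⟩ := hna
    exact hab (SchurBound.comm_of_bot h1 a b)
  obtain ⟨m, rfl⟩ : ∃ m, c = m + 1 := ⟨c - 1, by omega⟩
  obtain ⟨hkn, h⟩ := SchurBound.main_nat p n k m d hp G hcard hk hd
    (Subgroup.lowerCentralSeries_eq_bot_iff_nilpotencyClass_le.2 (by omega))
    (fun hb => by
      have := Subgroup.lowerCentralSeries_eq_bot_iff_nilpotencyClass_le.1 hb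
      omega)
  have := SchurBound.main_real p n k m d _ hp hcd hkn h
  push_cast
  exact this
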